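/- arXiv:1410.5107 — 4 statements merged into one kernel-verified Lean document; each statement's English description precedes it below -/
import Mathlib

section
/- For almost every tuple of complex matrices (H₁₂, H₂₁, H₁₃, H₂₃, H₃₁, H₃₂), with H₁₂, H₂₁ ∈ ℂ^{2×2}, H₁₃, H₂₃ ∈ ℂ^{2×1} (column vectors), and H₃₁, H₃₂ ∈ ℂ^{1×2} (row vectors), where 'almost every' is with respect to the product Lebesgue (volume) measure on the corresponding complex matrix spaces, there exist invertible matrices V₁, V₂, U₁, U₂ ∈ GL(2, ℂ) such that: U₁ H₁₂ V₂ is a diagonal 2×2 matrix; U₂ H₂₁ V₁ is a diagonal 2×2 matrix; the second entry of the column vector U₁ H₁₃ is zero; the second entry of the column vector U₂ H₂₃ is zero; the second entry of the row vector H₃₁ V₁ is zero; and the second entry of the row vector H₃₂ V₂ is zero. -/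
/-!
The requirements split into two independent problems of the same shape, one for
`(U₁, V₂)` with data `(H₁₂, H₁₃, H₃₂)` and one for `(U₂, V₁)` with data `(H₂₁, H₂₃, H₃₁)`:
given a `2 × 2` matrix `A`, a column `b` and a row `c`, find invertible `U`, `V` with `U A V`
diagonal, `(U b)₂ = 0` and `(c V)₂ = 0`. The second row of `U` must annihilate `b`, and the
second column of `V` must be annihilated by `c`; this fixes both up to scale. The first row of `U`
is then taken orthogonal to `A v₂`, and the first column of `V` is taken in the kernel of `u₂ A`.
Both determinants are equal up to sign to the trilinear form `c adj(A) b`, so the construction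
(`exists_diagonalizing`) works as soon as this number is nonzero. Genericity
of that condition follows from Fubini, since at each step a nonzero linear functional vanishes
only on a null set (`ae_linear_ne_zero`).
-/

open MeasureTheory

/-- Complex matrices carry the product Lebesgue (volume) measure, entrywise. -/
noncomputable instance matrixMeasureSpace (m n : Type*) [Fintype m] [Fintype n] :
    MeasureSpace (Matrix m n ℂ) :=
  inferInstanceAs (MeasureSpace (m → n → ℂ))

/-- The scalar `c adj(A) b`, written out in entries. -/
def adjForm (A : Fin 2 → Fin 2 → ℂ) (b : Fin 2 → Fin 1 → ℂ) (c : Fin 1 → Fin 2 → ℂ) : ℂ :=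
  c 0 0 * (A 1 1 * b 0 0 - A 0 1 * b 1 0) + c 0 1 * (A 0 0 * b 1 0 - A 1 0 * b 0 0)

theorem exists_diagonalizing (A : Matrix (Fin 2) (Fin 2) ℂ) (b : Matrix (Fin 2) (Fin 1) ℂ)
    (c : Matrix (Fin 1) (Fin 2) ℂ) (h : adjForm A b c ≠ 0) :
    ∃ U V : Matrix (Fin 2) (Fin 2) ℂ, IsUnit U ∧ IsUnit V ∧ (U * A * V).IsDiag ∧
      (U * b) 1 0 = 0 ∧ (c * V) 0 1 = 0 := by
  -- `x`, `y` are the entries of `A v₂` for `v₂ = (-c₂, c₁)`.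
  let x : ℂ := -A 0 0 * c 0 1 + A 0 1 * c 0 0
  let y : ℂ := -A 1 0 * c 0 1 + A 1 1 * c 0 0
  -- `s`, `t` are the entries of `u₂ A` for `u₂ = (-b₂, b₁)`.
  let s : ℂ := -b 1 0 * A 0 0 + b 0 0 * A 1 0
  let t : ℂ := -b 1 0 * A 0 1 + b 0 0 * A 1 1
  refine ⟨!![-y, x; -b 1 0, b 0 0], !![-t, -c 0 1; s, c 0 0], ?_, ?_, ?_, ?_, ?_⟩
  · rw [Matrix.isUnit_iff_isUnit_det, isUnit_iff_ne_zero, Matrix.det_fin_two_of]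
    contrapose! h
    simp only [adjForm, x, y] at h ⊢
    linear_combination -h
  · rw [Matrix.isUnit_iff_isUnit_det, isUnit_iff_ne_zero, Matrix.det_fin_two_of]
    contrapose! h
    simp only [adjForm, s, t] at h ⊢
    linear_combination -h
  · intro i j hij
    fin_cases i <;> fin_cases j <;>
      simp [Matrix.mul_apply, Matrix.vecMul, dotProduct, Fin.sum_univ_two, x, y, s, t] at hij ⊢ <;>
      ring
  · simp [Matrix.mul_apply, Fin.sum_univ_two]; ring
  · simp [Matrix.mul_apply, Fin.sum_univ_two]; ring

theorem ae_linear_ne_zero {m n : Type*} [Fintype m] [Fintype n]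
    (L : (m → n → ℂ) →ₗ[ℝ] ℂ) (hL : L ≠ 0) :
    ∀ᵐ x ∂(volume : Measure (m → n → ℂ)), L x ≠ 0 := by
  have hker : LinearMap.ker L ≠ ⊤ := fun h => hL (LinearMap.ker_eq_top.1 h)
  have hHaar : (volume : Measure (m → n → ℂ)).IsAddHaarMeasure :=
    Measure.pi.isAddHaarMeasure (fun _ : m => (volume : Measure (n → ℂ)))
  have h0 := Measure.addHaar_submodule (volume : Measure (m → n → ℂ)) _ hker
  rw [ae_iff]
  convert h0 using 2
  ext x
  simp

/-- A linear combination of two distinct entries with nonzero second coefficient is a.e. nonzero. -/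
theorem ae_entries_ne_zero {m n : Type*} [Fintype m] [Fintype n] (i k : m) (j l : n)
    (hne : (i, j) ≠ (k, l)) (α β : ℂ) (hβ : β ≠ 0) :
    ∀ᵐ x ∂(volume : Measure (m → n → ℂ)), α * x i j + β * x k l ≠ 0 := by
  classical
  let L : (m → n → ℂ) →ₗ[ℝ] ℂ :=
    { toFun := fun x => α * x i j + β * x k l
      map_add' := fun x y => by simp only [Pi.add_apply]; ring
      map_smul' := fun r x => by
        simp only [Pi.smul_apply, Complex.real_smul, RingHom.id_apply]; ring }
  refine ae_linear_ne_zero L fun h => hβ ?_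
  have h1 : α * (if i = k ∧ j = l then 1 else 0) + β * (if k = k ∧ l = l then 1 else 0) = 0 :=
    congrArg (fun f => f fun p q => if p = k ∧ q = l then (1 : ℂ) else 0) h
  have h2 : ¬ (i = k ∧ j = l) := fun h => hne (Prod.ext h.1 h.2)
  simpa [h2] using h1

theorem ae_prod_of_ae_ae {α β : Type*} [MeasureSpace α] [MeasureSpace β]
    [SFinite (volume : Measure β)] {f : α × β → ℂ} (hf : Measurable f)
    (h : ∀ᵐ a : α, ∀ᵐ b : β, f (a, b) ≠ 0) : ∀ᵐ x : α × β, f x ≠ 0 :=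
  (Measure.ae_prod_mem_iff_ae_ae_mem (s := {x | f x ≠ 0})
    (hf (measurableSet_singleton 0).compl)).2 h

set_option synthInstance.maxSize 2000 in
set_option synthInstance.maxHeartbeats 200000 in
theorem ae_adjForm_ne_zero :
    ∀ᵐ H : (Fin 2 → Fin 2 → ℂ) × (Fin 2 → Fin 2 → ℂ) × (Fin 2 → Fin 1 → ℂ) ×
        (Fin 2 → Fin 1 → ℂ) × (Fin 1 → Fin 2 → ℂ) × (Fin 1 → Fin 2 → ℂ),
      adjForm H.1 H.2.2.1 H.2.2.2.2.2 * adjForm H.2.1 H.2.2.2.1 H.2.2.2.2.1 ≠ 0 := by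
  -- It is enough that `A 0 0`, then the second entry of `adj(A) b`, then `c adj(A) b` be nonzero.
  have hA : ∀ᵐ A : Fin 2 → Fin 2 → ℂ, A 0 0 ≠ 0 := by
    simpa using ae_entries_ne_zero (m := Fin 2) (n := Fin 2) 1 0 1 0 (by simp) 0 1 one_ne_zero
  have hb : ∀ A : Fin 2 → Fin 2 → ℂ, A 0 0 ≠ 0 →
      ∀ᵐ b : Fin 2 → Fin 1 → ℂ, A 0 0 * b 1 0 - A 1 0 * b 0 0 ≠ 0 := by
    intro A h
    filter_upwards [ae_entries_ne_zero (m := Fin 2) (n := Fin 1) 0 1 0 0 (by simp)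
      (-A 1 0) (A 0 0) h] with b hb
    convert hb using 1
    ring
  have hc : ∀ (A : Fin 2 → Fin 2 → ℂ) (b : Fin 2 → Fin 1 → ℂ),
      A 0 0 * b 1 0 - A 1 0 * b 0 0 ≠ 0 → ∀ᵐ c : Fin 1 → Fin 2 → ℂ, adjForm A b c ≠ 0 := by
    intro A b h
    filter_upwards [ae_entries_ne_zero (m := Fin 1) (n := Fin 2) 0 0 0 1 (by simp)
      (A 1 1 * b 0 0 - A 0 1 * b 1 0) _ h] with c hc
    convert hc using 1
    simp only [adjForm]
    ring
  simp only [adjForm] at hc ⊢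
  refine ae_prod_of_ae_ae (by fun_prop) ?_
  filter_upwards [hA] with A₁ hA₁
  refine ae_prod_of_ae_ae (by fun_prop) ?_
  filter_upwards [hA] with A₂ hA₂
  refine ae_prod_of_ae_ae (by fun_prop) ?_
  filter_upwards [hb A₁ hA₁] with b₁ hb₁
  refine ae_prod_of_ae_ae (by fun_prop) ?_
  filter_upwards [hb A₂ hA₂] with b₂ hb₂
  refine ae_prod_of_ae_ae (by fun_prop) ?_
  filter_upwards [hc A₂ b₂ hb₂] with c₂ hc₂
  filter_upwards [hc A₁ b₁ hb₁] with c₁ hc₁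
  exact mul_ne_zero hc₁ hc₂

/-- For almost every tuple of cross channel matrices
`(H₁₂, H₂₁ ∈ ℂ^{2×2}, H₁₃, H₂₃ ∈ ℂ^{2×1}, H₃₁, H₃₂ ∈ ℂ^{1×2})` (w.r.t. the product
Lebesgue measure), there exist invertible beamforming and shaping matrices
`V₁, V₂, U₁, U₂ ∈ GL(2, ℂ)` such that `U₁ H₁₂ V₂` and `U₂ H₂₁ V₁` are diagonal, the
second entries of the columns `U₁ H₁₃` and `U₂ H₂₃` vanish, and the second entries of
the rows `H₃₁ V₁` and `H₃₂ V₂` vanish. -/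
theorem stmt5 :
    ∀ᵐ H ∂(volume : Measure
        ((Matrix (Fin 2) (Fin 2) ℂ) × (Matrix (Fin 2) (Fin 2) ℂ) ×
         (Matrix (Fin 2) (Fin 1) ℂ) × (Matrix (Fin 2) (Fin 1) ℂ) ×
         (Matrix (Fin 1) (Fin 2) ℂ) × (Matrix (Fin 1) (Fin 2) ℂ))),
      ∃ V₁ V₂ U₁ U₂ : Matrix (Fin 2) (Fin 2) ℂ,
        IsUnit V₁ ∧ IsUnit V₂ ∧ IsUnit U₁ ∧ IsUnit U₂ ∧
        (U₁ * H.1 * V₂).IsDiag ∧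
        (U₂ * H.2.1 * V₁).IsDiag ∧
        (U₁ * H.2.2.1) 1 0 = 0 ∧
        (U₂ * H.2.2.2.1) 1 0 = 0 ∧
        (H.2.2.2.2.1 * V₁) 0 1 = 0 ∧
        (H.2.2.2.2.2 * V₂) 0 1 = 0 := by
  have key := ae_adjForm_ne_zero
  -- Unfolding `Matrix` identifies the measure on matrices with the one on plain functions.
  delta matrixMeasureSpace
  unfold Matrix at *
  refine key.mono ?_
  intro H hH
  obtain ⟨U₁, V₂, hU₁, hV₂, h1, h2, h3⟩ :=
    exists_diagonalizing H.1 H.2.2.1 H.2.2.2.2.2 (left_ne_zero_of_mul hH)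
  obtain ⟨U₂, V₁, hU₂, hV₁, h4, h5, h6⟩ :=
    exists_diagonalizing H.2.1 H.2.2.2.1 H.2.2.2.2.1 (right_ne_zero_of_mul hH)
  exact ⟨V₁, V₂, U₁, U₂, hV₁, hV₂, hU₁, hU₂, h1, h4, h2, h5, h6, h3⟩
end

section
/- For almost every triple of complex matrices (H₁₂, H₁₃, H₃₂) with H₁₂ ∈ ℂ^{2×2}, H₁₃ ∈ ℂ^{2×1} (a column vector), and H₃₂ ∈ ℂ^{1×2} (a row vector), where 'almost every' is with respect to the product Lebesgue (volume) measure on the corresponding complex matrix spaces, the following holds: for every nonzero row vector u ∈ ℂ^{1×2} with u H₁₃ = 0, every nonzero column vector v₂₂ ∈ ℂ² with H₃₂ v₂₂ = 0, and every nonzero column vector v₂₁ ∈ ℂ² with (u H₁₂) v₂₁ = 0, the 2×2 matrix whose columns are v₂₁ and v₂₂ is invertible. -/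
/-!
Up to scaling, `u = (b, -a)` when `H₁₃ = (a, b)ᵀ`, and `v₂₂ = (d, -c)ᵀ` when `H₃₂ = (c, d)`.
If `v₂₁` and `v₂₂` are dependent, then `u H₁₂` also annihilates `v₂₂`, which says that the polynomial
`channelPoly = (b, -a) H₁₂ (d, -c)ᵀ` vanishes. So it suffices that `channelPoly` is nonzero almost
everywhere (`ae_channelPoly_ne_zero`). It is linear in each of the three matrices, so this follows
from Fubini and the fact that the kernel of a nonzero linear functional is a null set
(`ae_linear_ne_zero`).
-/

open MeasureTheory

/-- The trilinear form `(b, -a) H₁₂ (d, -c)ᵀ`, where `H₁₃ = (a, b)ᵀ` and `H₃₂ = (c, d)`.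
The matrices are given as plain functions, whose volume is definitionally that of matrices. -/
def channelPoly (A : Fin 2 → Fin 2 → ℂ) (B : Fin 2 → Fin 1 → ℂ) (C : Fin 1 → Fin 2 → ℂ) : ℂ :=
  (B 1 0 * A 0 0 - B 0 0 * A 1 0) * C 0 1 - (B 1 0 * A 0 1 - B 0 0 * A 1 1) * C 0 0

lemma ae_linear_ne_zero_s6 {m n : ℕ} (L : (Fin m → Fin n → ℂ) →ₗ[ℂ] ℂ) (x : Fin m → Fin n → ℂ)
    (hx : L x ≠ 0) : ∀ᵐ y : Fin m → Fin n → ℂ, L y ≠ 0 := by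
  have : Measure.IsAddHaarMeasure (volume : Measure (Fin m → Fin n → ℂ)) :=
    Measure.pi.isAddHaarMeasure (fun _ => (volume : Measure (Fin n → ℂ)))
  have h := Measure.addHaar_submodule (volume : Measure (Fin m → Fin n → ℂ))
    ((LinearMap.ker L).restrictScalars ℝ) (by
      intro h
      have : x ∈ (LinearMap.ker L).restrictScalars ℝ := h ▸ Submodule.mem_top
      exact hx (by simpa using this))
  rw [ae_iff]
  convert h using 2
  ext y
  simp

/-- The linear functional `X ↦ s * X i j + t * X k l`. -/
def twoEntries {m n : ℕ} (s t : ℂ) (i k : Fin m) (j l : Fin n) :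
    (Fin m → Fin n → ℂ) →ₗ[ℂ] ℂ where
  toFun X := s * X i j + t * X k l
  map_add' X Y := by simp only [Pi.add_apply]; ring
  map_smul' r X := by simp only [Pi.smul_apply, smul_eq_mul, RingHom.id_apply]; ring

lemma ae_channelPoly_ne_zero :
    ∀ᵐ H : (Fin 2 → Fin 2 → ℂ) × (Fin 2 → Fin 1 → ℂ) × (Fin 1 → Fin 2 → ℂ),
      channelPoly H.1 H.2.1 H.2.2 ≠ 0 := by
  have hmeas : MeasurableSet {H : (Fin 2 → Fin 2 → ℂ) × (Fin 2 → Fin 1 → ℂ) × (Fin 1 → Fin 2 → ℂ) |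
      channelPoly H.1 H.2.1 H.2.2 ≠ 0} := by
    refine IsOpen.measurableSet (isOpen_ne_fun ?_ continuous_const)
    unfold channelPoly
    fun_prop
  have : SFinite (volume : Measure ((Fin 2 → Fin 1 → ℂ) × (Fin 1 → Fin 2 → ℂ))) :=
    Measure.prod.instSFinite (μ := (volume : Measure (Fin 2 → Fin 1 → ℂ)))
      (ν := (volume : Measure (Fin 1 → Fin 2 → ℂ)))
  refine (Measure.ae_prod_iff_ae_ae hmeas).2 ?_
  filter_upwards [ae_linear_ne_zero_s6 (m := 2) (n := 2) (twoEntries 1 0 0 0 0 0) (fun _ _ => 1)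
    (by simp [twoEntries])] with A hA
  refine (Measure.ae_prod_iff_ae_ae (measurable_prodMk_left hmeas)).2 ?_
  have hA' : A 0 0 ≠ 0 := by simpa [twoEntries] using hA
  -- The first entry of `(b, -a) H₁₂` is a nonzero functional of `H₁₃` as soon as `H₁₂ 0 0 ≠ 0`.
  filter_upwards [ae_linear_ne_zero_s6 (m := 2) (n := 1) (twoEntries (A 0 0) (-A 1 0) 1 0 0 0)
    (fun i _ => ![0, 1] i) (by simpa [twoEntries] using hA')] with B hB
  have hB' : B 1 0 * A 0 0 - B 0 0 * A 1 0 ≠ 0 := by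
    convert hB using 1
    simp only [twoEntries, LinearMap.coe_mk, AddHom.coe_mk]
    ring
  filter_upwards [ae_linear_ne_zero_s6 (m := 1) (n := 2)
    (twoEntries (B 1 0 * A 0 0 - B 0 0 * A 1 0) (-(B 1 0 * A 0 1 - B 0 0 * A 1 1)) 0 0 1 0)
    (fun _ j => ![0, 1] j) (by simpa [twoEntries] using hB')] with C hC
  convert hC using 1
  simp only [twoEntries, channelPoly, LinearMap.coe_mk, AddHom.coe_mk]
  ring

/-- Two vectors of the plane annihilated by the same nonzero functional are parallel. -/
lemma cross_eq_zero {p q x y z w : ℂ} (h : p ≠ 0 ∨ q ≠ 0) (h₁ : p * x + q * y = 0)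
    (h₂ : p * z + q * w = 0) : x * w - y * z = 0 := by
  rcases h with h | h
  · refine (mul_eq_zero.1 (?_ : p * (x * w - y * z) = 0)).resolve_left h
    linear_combination w * h₁ - y * h₂
  · refine (mul_eq_zero.1 (?_ : q * (x * w - y * z) = 0)).resolve_left h
    linear_combination x * h₂ - z * h₁

/-- For almost every triple `(H₁₂ ∈ ℂ^{2×2}, H₁₃ ∈ ℂ^{2×1}, H₃₂ ∈ ℂ^{1×2})` (w.r.t. the
product Lebesgue measure): for every nonzero row `u` with `u H₁₃ = 0`, every nonzero
column `v₂₂` with `H₃₂ v₂₂ = 0`, and every nonzero column `v₂₁` with `(u H₁₂) v₂₁ = 0`,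
the `2 × 2` matrix with columns `v₂₁` and `v₂₂` is invertible. -/
theorem stmt6 :
    ∀ᵐ H ∂(volume : Measure
        ((Matrix (Fin 2) (Fin 2) ℂ) × (Matrix (Fin 2) (Fin 1) ℂ) ×
         (Matrix (Fin 1) (Fin 2) ℂ))),
      ∀ u : Matrix (Fin 1) (Fin 2) ℂ, u ≠ 0 → (u * H.2.1 : Matrix (Fin 1) (Fin 1) ℂ) = 0 →
      ∀ v₂₂ : Matrix (Fin 2) (Fin 1) ℂ, v₂₂ ≠ 0 → (H.2.2 * v₂₂ : Matrix (Fin 1) (Fin 1) ℂ) = 0 →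
      ∀ v₂₁ : Matrix (Fin 2) (Fin 1) ℂ, v₂₁ ≠ 0 → ((u * H.1) * v₂₁ : Matrix (Fin 1) (Fin 1) ℂ) = 0 →
        IsUnit (Matrix.of fun i j : Fin 2 => ![v₂₁ i 0, v₂₂ i 0] j) := by
  have key : ∀ᵐ H ∂(volume : Measure
        ((Matrix (Fin 2) (Fin 2) ℂ) × (Matrix (Fin 2) (Fin 1) ℂ) ×
         (Matrix (Fin 1) (Fin 2) ℂ))), channelPoly H.1 H.2.1 H.2.2 ≠ 0 := ae_channelPoly_ne_zero
  filter_upwards [key] with H hH u hu huH v hv hvH w hw hwH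
  obtain ⟨A, B, C⟩ := H
  have e₁ := congrFun (congrFun huH 0) 0
  have e₂ := congrFun (congrFun hvH 0) 0
  have e₃ := congrFun (congrFun hwH 0) 0
  simp only [Matrix.mul_apply, Fin.sum_univ_two, Matrix.zero_apply] at e₁ e₂ e₃
  have hu' : u 0 0 ≠ 0 ∨ u 0 1 ≠ 0 := by
    by_contra! h
    exact hu (by ext i j; fin_cases i; fin_cases j <;> simp [h])
  have hv' : v 0 0 ≠ 0 ∨ v 1 0 ≠ 0 := by
    by_contra! h
    exact hv (by ext i j; fin_cases j; fin_cases i <;> simp [h])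
  have hw' : w 0 0 ≠ 0 ∨ w 1 0 ≠ 0 := by
    by_contra! h
    exact hw (by ext i j; fin_cases j; fin_cases i <;> simp [h])
  rw [Matrix.isUnit_iff_isUnit_det, isUnit_iff_ne_zero, Matrix.det_fin_two]
  simp only [Matrix.of_apply, Matrix.cons_val_zero, Matrix.cons_val_one]
  intro hdet
  apply hH
  -- `u H₁₂` annihilates `v₂₂`, which is parallel to `v₂₁`.
  have e₄ : (u 0 0 * A 0 0 + u 0 1 * A 1 0) * v 0 0 + (u 0 0 * A 0 1 + u 0 1 * A 1 1) * v 1 0 = 0 := by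
    have := cross_eq_zero hw' (x := u 0 0 * A 0 0 + u 0 1 * A 1 0)
      (y := u 0 0 * A 0 1 + u 0 1 * A 1 1) (z := -v 1 0) (w := v 0 0)
      (by linear_combination e₃) (by linear_combination -hdet)
    linear_combination this
  -- Replace `v₂₂` by the parallel vector `(d, -c)`, then `u` by the parallel vector `(b, -a)`.
  have e₅ := cross_eq_zero hv' (x := u 0 0 * A 0 0 + u 0 1 * A 1 0)
    (y := u 0 0 * A 0 1 + u 0 1 * A 1 1) (z := C 0 0) (w := C 0 1)
    (by linear_combination e₄) (by linear_combination e₂)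
  have e₆ := cross_eq_zero hu' (x := A 0 0 * C 0 1 - A 0 1 * C 0 0)
    (y := A 1 0 * C 0 1 - A 1 1 * C 0 0) (z := B 0 0) (w := B 1 0)
    (by linear_combination e₅) (by linear_combination e₁)
  simp only [channelPoly]
  linear_combination e₆
end

section
/- Let M₁ ≥ M₂ ≥ M₃ ≥ 1 be integers with M₁ < M₂ + M₃, and set a = M₁ − M₃, b = M₂ + M₃ − M₁, c = M₁ − M₂ (so a + b + c = M₁, b + a = M₂, b + c = M₃). For almost every tuple of cross-channel matrices (H̄₁₂ ∈ ℂ^{M₁×M₂}, H̄₁₃ ∈ ℂ^{M₁×M₃}, H̄₂₁ ∈ ℂ^{M₂×M₁}, H̄₂₃ ∈ ℂ^{M₂×M₃}, H̄₃₁ ∈ ℂ^{M₃×M₁}, H̄₃₂ ∈ ℂ^{M₃×M₂}), with respect to the product Lebesgue (volume) measure, there exist invertible matrices U₁, V₁ ∈ GL(M₁,ℂ), U₂, V₂ ∈ GL(M₂,ℂ), U₃, V₃ ∈ GL(M₃,ℂ) such that the transformed matrices H_{ij} = U_i H̄_{ij} V_j have the following zero blocks. Partition the rows of receiver 1 into blocks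 of sizes (a, b, c), rows of receiver 2 into (b, a), rows of receiver 3 into (b, c); partition columns of transmitter 1 into (c, b, a), of transmitter 2 into (b, a), of transmitter 3 into (b, c). Then: in H₁₂ the blocks (1,1), (2,2), (3,1), (3,2) are zero; in H₁₃ the blocks (1,1), (1,2), (2,2), (3,1) are zero; in H₂₁ the blocks (1,1), (1,3), (2,1) are zero; in H₂₃ the block (2,1) is zero; in H₃₁ the blocks (1,1), (1,3), (2,3) are zero; and in H₃₂ the block (2,1) is zero. -/
/-!
Write `Hᵢⱼ` for the channels and `r, s, t` for the rows of `U₁, U₂, U₃`, and `z, w, v` for the columns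
of `V₁, V₂, V₃`. The zero blocks are obtained by the following choices.

* `r`: `a` vectors in the left kernel of `H₁₃`, then `b` fillers, then `c` vectors in the left kernel
  of `H₁₂`.
* `z`: `c` vectors in `ker H₂₁`, then `b` fillers, then `a` vectors in `ker H₃₁`.
* `v`: `b` vectors with `H₁₃ v ∈ range H₁₂`, then `c` vectors with `H₁₃ v` killed by the fillers of
  `r`; `w` is the same with users 2 and 3 exchanged.
* `s`: `b` vectors annihilating `H₂₁ (ker H₃₁)`, then `a` vectors annihilating `H₂₃ v` whenever
  `H₁₃ v ∈ range H₁₂`; `t` is the same with users 2 and 3 exchanged.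

Dimension counts provide enough vectors, and the families are bases because the two constrained
subspaces in each of them meet trivially. All of this follows from the injectivity (hence
bijectivity) of two endomorphisms that are linear in the channels, namely
`(x, v, w) ↦ (H₁₃ v + H₁₂ w, H₃₁ x, H₂₁ x + H₂₃ v)` and its mirror image under exchanging users 2 and
3 (`couplingMap`). A linear family of endomorphisms that is injective at one point is injective
almost everywhere (`ae_injective_of_exists`), and a suitable point is given by partial permutation
matrices (`exists_couplingMap_injective`).
-/

open MeasureTheory

/-! ### Genericity of injectivity -/

/-- A linear family of endomorphisms that is injective at one point `x₀` is injective almost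
everywhere. On each line in direction `x₀` the exceptional parameters are the eigenvalues of
`L x * (L x₀)⁻¹`, hence finite in number; Fubini and translation invariance conclude. -/
theorem ae_injective_of_exists {E X : Type*} [NormedAddCommGroup E] [NormedSpace ℂ E]
    [FiniteDimensional ℂ E] [MeasurableSpace E] [BorelSpace E] [SecondCountableTopology E]
    (μ : Measure E) [SFinite μ] [μ.IsAddLeftInvariant]
    [AddCommGroup X] [Module ℂ X] [FiniteDimensional ℂ X]
    (L : E →ₗ[ℂ] Module.End ℂ X) (x₀ : E) (h₀ : Function.Injective (L x₀)) :
    ∀ᵐ x ∂μ, Function.Injective (L x) := by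
  have inj_iff : ∀ f : Module.End ℂ X, Function.Injective f ↔ IsUnit f := fun f => by
    rw [LinearMap.isUnit_iff_ker_eq_bot, LinearMap.ker_eq_bot]
  simp only [inj_iff] at h₀ ⊢
  let β := Module.finBasis ℂ X
  let T : E →ₗ[ℂ] Matrix _ _ ℂ := (LinearMap.toMatrix β β).toLinearMap ∘ₗ L
  have hT : Continuous fun x => (T x).det :=
    (LinearMap.continuous_of_finiteDimensional T).matrix_det
  have unit_iff : ∀ x, IsUnit (L x) ↔ (T x).det ≠ 0 := fun x => by
    rw [← LinearMap.isUnit_toMatrix_iff β, Matrix.isUnit_iff_isUnit_det, isUnit_iff_ne_zero]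
    rfl
  have meas : MeasurableSet {p : E × ℂ | IsUnit (L (p.1 - p.2 • x₀))} := by
    simp only [unit_iff]
    have hc : Continuous fun p : E × ℂ => (T (p.1 - p.2 • x₀)).det :=
      hT.comp (by fun_prop)
    exact (isOpen_ne_fun hc continuous_const).measurableSet
  -- On every line in direction `x₀` only finitely many points are bad.
  have line : ∀ x, ∀ᵐ t : ℂ, IsUnit (L (x - t • x₀)) := by
    intro x
    obtain ⟨u, hu⟩ := h₀
    have hfin := Module.End.finite_spectrum (L x * (↑u⁻¹ : Module.End ℂ X))
    have h0 : (volume : Measure ℂ) (spectrum ℂ (L x * (↑u⁻¹ : Module.End ℂ X))) = 0 :=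
      hfin.measure_zero _
    filter_upwards [measure_eq_zero_iff_ae_notMem.1 h0] with t ht
    rw [spectrum.notMem_iff] at ht
    have e : L (x - t • x₀) =
        -((algebraMap ℂ (Module.End ℂ X) t - L x * (↑u⁻¹ : Module.End ℂ X)) * u) := by
      rw [sub_mul, mul_assoc, Units.inv_mul, mul_one, Algebra.algebraMap_eq_smul_one, hu,
        smul_mul_assoc, one_mul, neg_sub, map_sub, map_smul]
    rw [e]
    exact (ht.mul u.isUnit).neg
  have swap := (Measure.ae_ae_comm (μ := μ) (ν := (volume : Measure ℂ))
    (p := fun x t => IsUnit (L (x - t • x₀))) meas).1 (Filter.Eventually.of_forall line)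
  obtain ⟨t, ht⟩ := swap.exists
  have mp := measurePreserving_add_right μ (t • x₀)
  filter_upwards [mp.quasiMeasurePreserving.ae ht] with x hx
  simpa using hx

/-! ### Adapted bases and dimension counts -/

/-- Two subspaces meeting only in `0` have an adapted basis of the ambient space: the first `p`
vectors lie in `P`, the last `q` in `Q`, and the `m` in between are unconstrained. Every one of the
six transformations is obtained from this lemma. -/
theorem exists_adapted_family {n p m q : ℕ} (hn : n = p + m + q)
    (P Q : Submodule ℂ (Fin n → ℂ)) (hP : p ≤ Module.finrank ℂ P) (hQ : q ≤ Module.finrank ℂ Q)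
    (hPQ : ∀ x ∈ P, x ∈ Q → x = 0) :
    ∃ r : Fin n → Fin n → ℂ, LinearIndependent ℂ r ∧ (∀ i : Fin n, (i : ℕ) < p → r i ∈ P) ∧
      ∀ i : Fin n, p + m ≤ (i : ℕ) → r i ∈ Q := by
  have choose_family : ∀ (S : Submodule ℂ (Fin n → ℂ)) (k : ℕ), k ≤ Module.finrank ℂ S →
      ∃ f : Fin k → Fin n → ℂ, LinearIndependent ℂ f ∧ ∀ i, f i ∈ S := by
    intro S k hk
    refine ⟨fun i => (Module.finBasis ℂ S (Fin.castLE hk i) : Fin n → ℂ), ?_, fun i => ?_⟩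
    · exact ((Module.finBasis ℂ S).linearIndependent.comp _
        (Fin.castLE_injective hk)).map' S.subtype S.ker_subtype
    · exact Subtype.property _
  obtain ⟨f, hf, hfP⟩ := choose_family P p hP
  obtain ⟨g, hg, hgQ⟩ := choose_family Q q hQ
  have hfg : LinearIndependent ℂ (Sum.elim f g) := by
    refine hf.sum_type hg (Disjoint.mono (Submodule.span_le.2 ?_) (Submodule.span_le.2 ?_)
      (Submodule.disjoint_def.2 hPQ))
    · rintro _ ⟨i, rfl⟩; exact hfP i
    · rintro _ ⟨i, rfl⟩; exact hgQ i
  obtain ⟨W, hW⟩ := Submodule.exists_isCompl (Submodule.span ℂ (Set.range (Sum.elim f g)))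
  have hd := Submodule.finrank_add_eq_of_isCompl hW
  rw [finrank_span_eq_card hfg] at hd
  simp only [Fintype.card_sum, Fintype.card_fin, Module.finrank_fin_fun] at hd
  obtain ⟨k, hk, hkW⟩ := choose_family W m (by omega)
  have hall : LinearIndependent ℂ (Sum.elim (Sum.elim f g) k) := by
    refine hfg.sum_type hk (hW.disjoint.mono_right (Submodule.span_le.2 ?_))
    rintro _ ⟨i, rfl⟩; exact hkW i
  let e : Fin n → (Fin p ⊕ Fin q) ⊕ Fin m := fun i =>
    if h : (i : ℕ) < p then .inl (.inl ⟨i, h⟩)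
    else if h' : (i : ℕ) < p + m then .inr ⟨i - p, by omega⟩
    else .inl (.inr ⟨i - (p + m), by omega⟩)
  have he : Function.Injective e := by
    intro i j hij
    simp only [e] at hij
    ext
    split_ifs at hij <;> simp at hij <;> omega
  refine ⟨_, hall.comp e he, fun i hi => ?_, fun i hi => ?_⟩
  · simp only [Function.comp_apply, e, dif_pos hi, Sum.elim_inl]
    exact hfP _
  · have h1 : ¬ (i : ℕ) < p := by omega
    have h2 : ¬ (i : ℕ) < p + m := by omega
    simp only [Function.comp_apply, e, dif_neg h1, dif_neg h2, Sum.elim_inl, Sum.elim_inr]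
    exact hgQ _

theorem finrank_ker_ge {V W : Type*} [AddCommGroup V] [Module ℂ V] [FiniteDimensional ℂ V]
    [AddCommGroup W] [Module ℂ W] [FiniteDimensional ℂ W] (f : V →ₗ[ℂ] W) :
    Module.finrank ℂ V ≤ Module.finrank ℂ f.ker + Module.finrank ℂ W := by
  have h1 := f.finrank_range_add_finrank_ker
  have h2 := Submodule.finrank_le f.range
  omega

theorem finrank_ker_of_surjective {V W : Type*} [AddCommGroup V] [Module ℂ V]
    [FiniteDimensional ℂ V] [AddCommGroup W] [Module ℂ W] [FiniteDimensional ℂ W]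
    (f : V →ₗ[ℂ] W) (hf : Function.Surjective f) :
    Module.finrank ℂ V = Module.finrank ℂ f.ker + Module.finrank ℂ W := by
  have h1 := f.finrank_range_add_finrank_ker
  rw [LinearMap.range_eq_top.2 hf, finrank_top] at h1
  omega

/-- The vectors orthogonal (for the bilinear dot product) to the image under `A` of `K`. -/
def annImage {n m : ℕ} (A : Matrix (Fin n) (Fin m) ℂ) (K : Submodule ℂ (Fin m → ℂ)) :
    Submodule ℂ (Fin n → ℂ) where
  carrier := {s | ∀ x ∈ K, s ⬝ᵥ A.mulVec x = 0}
  add_mem' h h' x hx := by rw [add_dotProduct, h x hx, h' x hx, add_zero]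
  zero_mem' x _ := zero_dotProduct _
  smul_mem' t s h x hx := by rw [smul_dotProduct, h x hx, smul_zero]

theorem finrank_annImage_ge {n m : ℕ} (A : Matrix (Fin n) (Fin m) ℂ)
    (K : Submodule ℂ (Fin m → ℂ)) :
    n ≤ Module.finrank ℂ (annImage A K) + Module.finrank ℂ K := by
  let β := Module.finBasis ℂ K
  let g : Matrix (Fin (Module.finrank ℂ K)) (Fin n) ℂ :=
    Matrix.of fun i => A.mulVec (β i : Fin m → ℂ)
  have h1 := finrank_ker_ge g.mulVecLin
  have h2 : g.mulVecLin.ker ≤ annImage A K := by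
    intro s hs x hx
    have hβ : ∀ i, s ⬝ᵥ A.mulVec (β i : Fin m → ℂ) = 0 := fun i => by
      rw [dotProduct_comm]
      exact congrFun (LinearMap.mem_ker.1 hs) i
    have hx' := congrArg Subtype.val (β.sum_repr ⟨x, hx⟩)
    simp only [AddSubmonoidClass.coe_finsetSum, Submodule.coe_smul] at hx'
    rw [← hx', Matrix.mulVec_sum, dotProduct_sum]
    refine Finset.sum_eq_zero fun i _ => ?_
    rw [Matrix.mulVec_smul, dotProduct_smul, hβ, smul_zero]
  have h3 := Submodule.finrank_mono h2
  simp only [Module.finrank_fin_fun] at h1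
  omega

/-! ### The coupling map -/

/-- The endomorphism `(x, v, w) ↦ (B v + A w, F x, C x + G v)` of `ℂˡ × ℂⁿ × ℂᵐ`. Here `A` and `B`
are the two channels into receiver 1, `C` and `F` the two channels out of transmitter 1, and `G` one
of the channels between users 2 and 3. -/
def couplingMap {l m n : ℕ} (A : Matrix (Fin l) (Fin m) ℂ) (B : Matrix (Fin l) (Fin n) ℂ)
    (C : Matrix (Fin m) (Fin l) ℂ) (F : Matrix (Fin n) (Fin l) ℂ)
    (G : Matrix (Fin m) (Fin n) ℂ) :
    Module.End ℂ ((Fin l → ℂ) × (Fin n → ℂ) × (Fin m → ℂ)) where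
  toFun p := (B.mulVec p.2.1 + A.mulVec p.2.2, F.mulVec p.1, C.mulVec p.1 + G.mulVec p.2.1)
  map_add' p q := by
    simp only [Prod.fst_add, Prod.snd_add, Matrix.mulVec_add, Prod.mk_add_mk]
    congr 1
    · abel
    · congr 1
      abel
  map_smul' t p := by
    simp only [Prod.smul_fst, Prod.smul_snd, Matrix.mulVec_smul, Prod.smul_mk, smul_add,
      RingHom.id_apply]

theorem couplingMap_apply {l m n : ℕ} (A : Matrix (Fin l) (Fin m) ℂ)
    (B : Matrix (Fin l) (Fin n) ℂ) (C : Matrix (Fin m) (Fin l) ℂ) (F : Matrix (Fin n) (Fin l) ℂ)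
    (G : Matrix (Fin m) (Fin n) ℂ) (x : Fin l → ℂ) (v : Fin n → ℂ) (w : Fin m → ℂ) :
    couplingMap A B C F G (x, v, w) =
      (B.mulVec v + A.mulVec w, F.mulVec x, C.mulVec x + G.mulVec v) := rfl

theorem mulVec_select {m n : ℕ} (P : Fin m → Fin n → Prop) [∀ i j, Decidable (P i j)]
    (i : Fin m) (j : Fin n) (h : ∀ k, P i k ↔ k = j) (x : Fin n → ℂ) :
    (Matrix.of fun i j => if P i j then (1 : ℂ) else 0).mulVec x i = x j := by
  simp [Matrix.mulVec, dotProduct, h]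

theorem mulVec_select_none {m n : ℕ} (P : Fin m → Fin n → Prop) [∀ i j, Decidable (P i j)]
    (i : Fin m) (h : ∀ k, ¬ P i k) (x : Fin n → ℂ) :
    (Matrix.of fun i j => if P i j then (1 : ℂ) else 0).mulVec x i = 0 := by
  simp [Matrix.mulVec, dotProduct, h]

/-- One choice of channels with injective coupling map. All five matrices are partial permutation
matrices: `F` and `C` read off complementary coordinates of `x`, `G` and `B` complementary
coordinates of `v`, and `A` all coordinates of `w`, without overlap in the outputs. -/
theorem exists_couplingMap_injective {l m n a b c : ℕ} (hl : l = a + b + c) (hm : m = b + a)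
    (hn : n = b + c) :
    ∃ (A : Matrix (Fin l) (Fin m) ℂ) (B : Matrix (Fin l) (Fin n) ℂ)
      (C : Matrix (Fin m) (Fin l) ℂ) (F : Matrix (Fin n) (Fin l) ℂ)
      (G : Matrix (Fin m) (Fin n) ℂ), Function.Injective (couplingMap A B C F G) := by
  refine ⟨Matrix.of fun i j => if (i : ℕ) = j then 1 else 0,
    Matrix.of fun i j => if (i : ℕ) = a + j ∧ b ≤ (j : ℕ) then 1 else 0,
    Matrix.of fun i j => if b ≤ (i : ℕ) ∧ (j : ℕ) = i + c then 1 else 0,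
    Matrix.of fun i j => if (i : ℕ) = j then 1 else 0,
    Matrix.of fun i j => if (i : ℕ) = j ∧ (i : ℕ) < b then 1 else 0, ?_⟩
  rw [← LinearMap.ker_eq_bot, LinearMap.ker_eq_bot']
  rintro ⟨x, v, w⟩ h
  rw [couplingMap_apply] at h
  simp only [Prod.mk_eq_zero] at h
  obtain ⟨h1, h2, h3⟩ := h
  have hx : ∀ k : Fin l, x k = 0 := by
    intro k
    by_cases hk : (k : ℕ) < n
    · have := congrFun h2 ⟨k, hk⟩
      rwa [mulVec_select _ _ k (fun j => by simp [Fin.ext_iff, eq_comm])] at this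
    · have := congrFun h3 ⟨k - c, by omega⟩
      rwa [Pi.add_apply, mulVec_select _ _ k (fun j => by simp [Fin.ext_iff]; omega),
        mulVec_select_none _ _ (fun j => by simp; omega), add_zero] at this
  have hv : ∀ k : Fin n, v k = 0 := by
    intro k
    by_cases hk : (k : ℕ) < b
    · have := congrFun h3 ⟨k, by omega⟩
      rwa [Pi.add_apply, mulVec_select_none _ _ (fun j => by simp; omega),
        mulVec_select _ _ k (fun j => by simp [Fin.ext_iff]; omega), zero_add] at this
    · have := congrFun h1 ⟨a + k, by omega⟩
      rwa [Pi.add_apply, mulVec_select _ _ k (fun j => by simp [Fin.ext_iff]; omega),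
        mulVec_select_none _ _ (fun j => by simp; omega), add_zero] at this
  have hw : ∀ k : Fin m, w k = 0 := by
    intro k
    have := congrFun h1 ⟨k, by omega⟩
    rwa [Pi.add_apply, mulVec_select_none _ _ (fun j => by simp; omega),
      mulVec_select _ _ k (fun j => by simp [Fin.ext_iff, eq_comm]), zero_add] at this
  simp only [Prod.mk_eq_zero]
  exact ⟨funext hx, funext hv, funext hw⟩

section Consequences

variable {l m n a b c : ℕ} {A : Matrix (Fin l) (Fin m) ℂ} {B : Matrix (Fin l) (Fin n) ℂ}
  {C : Matrix (Fin m) (Fin l) ℂ} {F : Matrix (Fin n) (Fin l) ℂ} {G : Matrix (Fin m) (Fin n) ℂ}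

theorem couplingMap_surj (h : Function.Injective (couplingMap A B C F G)) (y₁ : Fin l → ℂ)
    (y₂ : Fin n → ℂ) (y₃ : Fin m → ℂ) : ∃ x v w, B.mulVec v + A.mulVec w = y₁ ∧
      F.mulVec x = y₂ ∧ C.mulVec x + G.mulVec v = y₃ := by
  obtain ⟨⟨x, v, w⟩, hp⟩ := LinearMap.injective_iff_surjective.1 h (y₁, y₂, y₃)
  rw [couplingMap_apply] at hp
  simp only [Prod.mk.injEq] at hp
  exact ⟨x, v, w, hp⟩

theorem couplingMap_inj (h : Function.Injective (couplingMap A B C F G)) {x : Fin l → ℂ}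
    {v : Fin n → ℂ} {w : Fin m → ℂ} (h1 : B.mulVec v + A.mulVec w = 0) (h2 : F.mulVec x = 0)
    (h3 : C.mulVec x + G.mulVec v = 0) : x = 0 ∧ v = 0 ∧ w = 0 := by
  have := LinearMap.ker_eq_bot'.1 (LinearMap.ker_eq_bot.2 h) (x, v, w)
    (by rw [couplingMap_apply, h1, h2, h3]; rfl)
  simpa only [Prod.mk_eq_zero] using this

theorem mulVec_eq_zero_of_couplingMap (h : Function.Injective (couplingMap A B C F G))
    {w : Fin m → ℂ} (hw : A.mulVec w = 0) : w = 0 :=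
  (couplingMap_inj h (x := 0) (v := 0) (w := w) (by simp [hw]) (by simp) (by simp)).2.2

/-- The signals `v` whose image under `B` lies in the range of `A`, i.e. those whose interference at
receiver 1 is aligned with that of the other interferer. -/
def alignedSpace (A : Matrix (Fin l) (Fin m) ℂ) (B : Matrix (Fin l) (Fin n) ℂ) :
    Submodule ℂ (Fin n → ℂ) :=
  (A.mulVecLin.range.mkQ ∘ₗ B.mulVecLin).ker

theorem mem_alignedSpace {v : Fin n → ℂ} :
    v ∈ alignedSpace A B ↔ ∃ w, A.mulVec w = B.mulVec v := by
  simp [alignedSpace]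

/-- `ℂˡ` modulo the range of `A` has dimension `l - m = c`, and `B` maps onto it, so the kernel of
`ℂⁿ → ℂˡ / range A` has dimension `n - c = b`. -/
theorem finrank_alignedSpace (hl : l = a + b + c) (hm : m = b + a) (hn : n = b + c)
    (h : Function.Injective (couplingMap A B C F G)) :
    Module.finrank ℂ (alignedSpace A B) = b := by
  have hA : Module.finrank ℂ A.mulVecLin.range = m := by
    rw [LinearMap.finrank_range_of_inj, Module.finrank_fin_fun]
    rw [← LinearMap.ker_eq_bot, LinearMap.ker_eq_bot']
    exact fun w hw => mulVec_eq_zero_of_couplingMap h hw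
  have hs : Function.Surjective (A.mulVecLin.range.mkQ ∘ₗ B.mulVecLin) := by
    intro y
    obtain ⟨y, rfl⟩ := Submodule.mkQ_surjective _ y
    obtain ⟨x, v, w, h1, -, -⟩ := couplingMap_surj h y 0 0
    refine ⟨v, ?_⟩
    rw [LinearMap.comp_apply, Submodule.mkQ_apply, Submodule.mkQ_apply,
      Submodule.Quotient.eq]
    exact ⟨-w, by simp [← h1, Matrix.mulVec_neg]⟩
  have h1 := finrank_ker_of_surjective _ hs
  have h2 := Submodule.finrank_quotient_add_finrank A.mulVecLin.range
  simp only [Module.finrank_fin_fun] at h1 h2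
  change n = Module.finrank ℂ (alignedSpace A B) + _ at h1
  omega

/-- Rows of the shaping matrix at receiver 2 (or 3): the first `b` annihilate `C (ker F)`, of
dimension at most `a`, and the last `a` annihilate the `G`-image of the aligned space, of dimension
at most `b`. Surjectivity of the coupling map says that these two images span `ℂᵐ`. -/
theorem exists_receiver_shaping (hl : l = a + b + c) (hm : m = b + a) (hn : n = b + c)
    (h : Function.Injective (couplingMap A B C F G)) :
    ∃ s : Fin m → Fin m → ℂ, LinearIndependent ℂ s ∧
      (∀ i : Fin m, (i : ℕ) < b → ∀ x, F.mulVec x = 0 → s i ⬝ᵥ C.mulVec x = 0) ∧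
      ∀ i : Fin m, b ≤ (i : ℕ) → ∀ v ∈ alignedSpace A B, s i ⬝ᵥ G.mulVec v = 0 := by
  have h1 := finrank_annImage_ge C F.mulVecLin.ker
  have h2 := finrank_annImage_ge G (alignedSpace A B)
  have h3 := finrank_ker_of_surjective F.mulVecLin fun y => by
    obtain ⟨x, v, w, -, h2, -⟩ := couplingMap_surj h 0 y 0
    exact ⟨x, h2⟩
  rw [finrank_alignedSpace hl hm hn h] at h2
  simp only [Module.finrank_fin_fun] at h3
  obtain ⟨s, hs, hs1, hs2⟩ := exists_adapted_family (p := b) (m := 0) (q := a) (by omega)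
    (annImage C F.mulVecLin.ker) (annImage G (alignedSpace A B)) (by omega) (by omega)
    (by
      intro s hs1 hs2
      -- The two images together span the whole space, so `s` is orthogonal to everything.
      refine dotProduct_eq_zero _ fun y => ?_
      obtain ⟨x, v, w, e1, e2, e3⟩ := couplingMap_surj h 0 0 y
      rw [← e3, dotProduct_add, hs1 x e2, hs2 v (mem_alignedSpace.2 ⟨-w, ?_⟩), add_zero]
      rw [Matrix.mulVec_neg]
      exact (eq_neg_of_add_eq_zero_left e1).symm)
  exact ⟨s, hs, hs1, hs2⟩

/-- Columns of the beamforming matrix at transmitter 3 (or 2): the first `b` span the aligned space,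
the last `c` are invisible to the middle rows `r` of receiver 1. The hypothesis `hr` makes these two
subspaces independent. -/
theorem exists_beamforming (hl : l = a + b + c) (hm : m = b + a) (hn : n = b + c)
    (h : Function.Injective (couplingMap A B C F G))
    (hB : ∀ v, B.mulVec v = 0 → v = 0)
    (r : Fin b → Fin l → ℂ)
    (hr : ∀ w v, A.mulVec w = B.mulVec v → (∀ k, r k ⬝ᵥ B.mulVec v = 0) → B.mulVec v = 0) :
    ∃ v : Fin n → Fin n → ℂ, LinearIndependent ℂ v ∧
      (∀ j : Fin n, (j : ℕ) < b → v j ∈ alignedSpace A B) ∧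
      ∀ j : Fin n, b ≤ (j : ℕ) → ∀ k, r k ⬝ᵥ B.mulVec (v j) = 0 := by
  have h1 := finrank_ker_ge (Matrix.mulVecLin (Matrix.of r) ∘ₗ B.mulVecLin)
  have h2 := finrank_alignedSpace hl hm hn h
  simp only [Module.finrank_fin_fun] at h1
  have mem : ∀ v, v ∈ (Matrix.mulVecLin (Matrix.of r) ∘ₗ B.mulVecLin).ker →
      ∀ k, r k ⬝ᵥ B.mulVec v = 0 := fun v hv k => congrFun (LinearMap.mem_ker.1 hv) k
  obtain ⟨v, hv, hv1, hv2⟩ := exists_adapted_family (p := b) (m := 0) (q := c) (by omega)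
    (alignedSpace A B) (Matrix.mulVecLin (Matrix.of r) ∘ₗ B.mulVecLin).ker (by omega) (by omega)
    (by
      intro v hv1 hv2
      obtain ⟨w, hw⟩ := mem_alignedSpace.1 hv1
      exact hB v (hr w v hw (mem v hv2)))
  exact ⟨v, hv, hv1, fun j hj => mem _ (hv2 j hj)⟩

end Consequences

/-! ### From families of vectors to matrices, and from channels to coupling maps -/

theorem mul_mul_transpose_apply {m n : ℕ} (r : Fin m → Fin m → ℂ) (H : Matrix (Fin m) (Fin n) ℂ)
    (v : Fin n → Fin n → ℂ) (i : Fin m) (j : Fin n) :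
    (Matrix.of r * H * (Matrix.of v).transpose) i j = r i ⬝ᵥ H.mulVec (v j) := by
  rw [Matrix.mul_assoc]
  rfl

theorem isUnit_of_rows {n : ℕ} {r : Fin n → Fin n → ℂ} (h : LinearIndependent ℂ r) :
    IsUnit (Matrix.of r) :=
  Matrix.linearIndependent_rows_iff_isUnit.1 h

theorem isUnit_of_cols {n : ℕ} {r : Fin n → Fin n → ℂ} (h : LinearIndependent ℂ r) :
    IsUnit (Matrix.of r).transpose :=
  Matrix.linearIndependent_cols_iff_isUnit.1 h

theorem eq_zero_of_dotProduct_family {n : ℕ} {r : Fin n → Fin n → ℂ}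
    (h : LinearIndependent ℂ r) {y : Fin n → ℂ} (hy : ∀ i, r i ⬝ᵥ y = 0) : y = 0 :=
  Matrix.mulVec_injective_of_isUnit (isUnit_of_rows h)
    (show (Matrix.of r).mulVec y = (Matrix.of r).mulVec 0 by
      rw [Matrix.mulVec_zero]; exact funext hy)

/-- The coupling map with `A = H₁₂`, `B = H₁₃`, `C = H₂₁`, `F = H₃₁`, `G = H₂₃`, as a linear function
of the channel tuple. It governs the shaping matrix of receiver 2. -/
def couplingMapOfTuple₂ (M₁ M₂ M₃ : ℕ) :
    ((Matrix (Fin M₁) (Fin M₂) ℂ) × (Matrix (Fin M₁) (Fin M₃) ℂ) ×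
      (Matrix (Fin M₂) (Fin M₁) ℂ) × (Matrix (Fin M₂) (Fin M₃) ℂ) ×
      (Matrix (Fin M₃) (Fin M₁) ℂ) × (Matrix (Fin M₃) (Fin M₂) ℂ)) →ₗ[ℂ]
    Module.End ℂ ((Fin M₁ → ℂ) × (Fin M₃ → ℂ) × (Fin M₂ → ℂ)) where
  toFun H := couplingMap H.1 H.2.1 H.2.2.1 H.2.2.2.2.1 H.2.2.2.1
  map_add' H K := by
    refine LinearMap.ext fun ⟨x, v, w⟩ => ?_
    simp only [LinearMap.add_apply, couplingMap_apply, Prod.fst_add, Prod.snd_add,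
      Matrix.add_mulVec, Prod.mk_add_mk, Prod.mk.injEq, true_and]
    constructor <;> abel
  map_smul' t H := by
    refine LinearMap.ext fun ⟨x, v, w⟩ => ?_
    simp only [LinearMap.smul_apply, couplingMap_apply, Prod.smul_fst, Prod.smul_snd,
      Matrix.smul_mulVec, Prod.smul_mk, smul_add, RingHom.id_apply]

/-- The coupling map with users 2 and 3 exchanged: `A = H₁₃`, `B = H₁₂`, `C = H₃₁`, `F = H₂₁`,
`G = H₃₂`. It governs the shaping matrix of receiver 3. -/
def couplingMapOfTuple₃ (M₁ M₂ M₃ : ℕ) :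
    ((Matrix (Fin M₁) (Fin M₂) ℂ) × (Matrix (Fin M₁) (Fin M₃) ℂ) ×
      (Matrix (Fin M₂) (Fin M₁) ℂ) × (Matrix (Fin M₂) (Fin M₃) ℂ) ×
      (Matrix (Fin M₃) (Fin M₁) ℂ) × (Matrix (Fin M₃) (Fin M₂) ℂ)) →ₗ[ℂ]
    Module.End ℂ ((Fin M₁ → ℂ) × (Fin M₂ → ℂ) × (Fin M₃ → ℂ)) where
  toFun H := couplingMap H.2.1 H.1 H.2.2.2.2.1 H.2.2.1 H.2.2.2.2.2
  map_add' H K := by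
    refine LinearMap.ext fun ⟨x, v, w⟩ => ?_
    simp only [LinearMap.add_apply, couplingMap_apply, Prod.fst_add, Prod.snd_add,
      Matrix.add_mulVec, Prod.mk_add_mk, Prod.mk.injEq, true_and]
    constructor <;> abel
  map_smul' t H := by
    refine LinearMap.ext fun ⟨x, v, w⟩ => ?_
    simp only [LinearMap.smul_apply, couplingMap_apply, Prod.smul_fst, Prod.smul_snd,
      Matrix.smul_mulVec, Prod.smul_mk, smul_add, RingHom.id_apply]

/-- The volume of a product is by definition the product of the volumes. -/
instance volume_prod_isAddLeftInvariant {G K : Type*} [AddGroup G] [AddGroup K] [MeasureSpace G]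
    [MeasureSpace K] [MeasurableAdd G] [MeasurableAdd K] [SFinite (volume : Measure G)]
    [SFinite (volume : Measure K)] [(volume : Measure G).IsAddLeftInvariant]
    [(volume : Measure K).IsAddLeftInvariant] :
    (volume : Measure (G × K)).IsAddLeftInvariant :=
  Measure.prod.instIsAddLeftInvariant

set_option synthInstance.maxHeartbeats 400000 in
set_option synthInstance.maxSize 4000 in
-- The sixfold product of function spaces makes for a large instance search.
theorem ae_tuple_injective {M₁ M₂ M₃ : ℕ} {X : Type*} [AddCommGroup X] [Module ℂ X]
    [FiniteDimensional ℂ X]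
    (L : ((Matrix (Fin M₁) (Fin M₂) ℂ) × (Matrix (Fin M₁) (Fin M₃) ℂ) ×
      (Matrix (Fin M₂) (Fin M₁) ℂ) × (Matrix (Fin M₂) (Fin M₃) ℂ) ×
      (Matrix (Fin M₃) (Fin M₁) ℂ) × (Matrix (Fin M₃) (Fin M₂) ℂ)) →ₗ[ℂ] Module.End ℂ X)
    (h : ∃ H, Function.Injective (L H)) :
    ∀ᵐ H ∂(volume : Measure
        ((Matrix (Fin M₁) (Fin M₂) ℂ) × (Matrix (Fin M₁) (Fin M₃) ℂ) ×
         (Matrix (Fin M₂) (Fin M₁) ℂ) × (Matrix (Fin M₂) (Fin M₃) ℂ) ×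
         (Matrix (Fin M₃) (Fin M₁) ℂ) × (Matrix (Fin M₃) (Fin M₂) ℂ))),
      Function.Injective (L H) := by
  obtain ⟨H₀, h₀⟩ := h
  -- A matrix type is a function type with its product measure; the function type carries a norm.
  have key := ae_injective_of_exists
    (E := (Fin M₁ → Fin M₂ → ℂ) × (Fin M₁ → Fin M₃ → ℂ) × (Fin M₂ → Fin M₁ → ℂ) ×
      (Fin M₂ → Fin M₃ → ℂ) × (Fin M₃ → Fin M₁ → ℂ) × (Fin M₃ → Fin M₂ → ℂ))
    volume L H₀ h₀
  exact key

/-! ### The channel transformation -/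

/-- General 3-user channel transformation. With `M₁ ≥ M₂ ≥ M₃ ≥ 1`, `M₁ < M₂ + M₃`,
`a = M₁ − M₃`, `b = M₂ + M₃ − M₁`, `c = M₁ − M₂`, for almost every tuple of cross
channel matrices (product Lebesgue measure) there are invertible shaping matrices
`Uᵢ` and beamforming matrices `Vᵢ` making the transformed matrices `Hᵢⱼ = Uᵢ H̄ᵢⱼ Vⱼ`
vanish on the stated blocks, where the row blocks of receivers 1, 2, 3 have sizes
`(a,b,c)`, `(b,a)`, `(b,c)` and the column blocks of transmitters 1, 2, 3 have sizes
`(c,b,a)`, `(b,a)`, `(b,c)`. -/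
theorem stmt7 (M₁ M₂ M₃ a b c : ℕ)
    (h12 : M₂ ≤ M₁) (h23 : M₃ ≤ M₂) (h3 : 1 ≤ M₃) (hnd : M₁ < M₂ + M₃)
    (ha : a = M₁ - M₃) (hb : b = M₂ + M₃ - M₁) (hc : c = M₁ - M₂) :
    ∀ᵐ H ∂(volume : Measure
        ((Matrix (Fin M₁) (Fin M₂) ℂ) × (Matrix (Fin M₁) (Fin M₃) ℂ) ×
         (Matrix (Fin M₂) (Fin M₁) ℂ) × (Matrix (Fin M₂) (Fin M₃) ℂ) ×
         (Matrix (Fin M₃) (Fin M₁) ℂ) × (Matrix (Fin M₃) (Fin M₂) ℂ))),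
      ∃ (U₁ V₁ : Matrix (Fin M₁) (Fin M₁) ℂ) (U₂ V₂ : Matrix (Fin M₂) (Fin M₂) ℂ)
        (U₃ V₃ : Matrix (Fin M₃) (Fin M₃) ℂ),
        IsUnit U₁ ∧ IsUnit V₁ ∧ IsUnit U₂ ∧ IsUnit V₂ ∧ IsUnit U₃ ∧ IsUnit V₃ ∧
        -- H₁₂ = U₁ H̄₁₂ V₂ : blocks (1,1), (2,2), (3,1), (3,2) vanish
        (∀ (i : Fin M₁) (j : Fin M₂),
          ((i : ℕ) < a ∧ (j : ℕ) < b) ∨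
          (a ≤ (i : ℕ) ∧ (i : ℕ) < a + b ∧ b ≤ (j : ℕ)) ∨
          (a + b ≤ (i : ℕ) ∧ (j : ℕ) < b) ∨
          (a + b ≤ (i : ℕ) ∧ b ≤ (j : ℕ)) →
          (U₁ * H.1 * V₂) i j = 0) ∧
        -- H₁₃ = U₁ H̄₁₃ V₃ : blocks (1,1), (1,2), (2,2), (3,1) vanish
        (∀ (i : Fin M₁) (j : Fin M₃),
          ((i : ℕ) < a ∧ (j : ℕ) < b) ∨
          ((i : ℕ) < a ∧ b ≤ (j : ℕ)) ∨
          (a ≤ (i : ℕ) ∧ (i : ℕ) < a + b ∧ b ≤ (j : ℕ)) ∨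
          (a + b ≤ (i : ℕ) ∧ (j : ℕ) < b) →
          (U₁ * H.2.1 * V₃) i j = 0) ∧
        -- H₂₁ = U₂ H̄₂₁ V₁ : blocks (1,1), (1,3), (2,1) vanish
        (∀ (i : Fin M₂) (j : Fin M₁),
          ((i : ℕ) < b ∧ (j : ℕ) < c) ∨
          ((i : ℕ) < b ∧ c + b ≤ (j : ℕ)) ∨
          (b ≤ (i : ℕ) ∧ (j : ℕ) < c) →
          (U₂ * H.2.2.1 * V₁) i j = 0) ∧
        -- H₂₃ = U₂ H̄₂₃ V₃ : block (2,1) vanishes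
        (∀ (i : Fin M₂) (j : Fin M₃),
          (b ≤ (i : ℕ) ∧ (j : ℕ) < b) →
          (U₂ * H.2.2.2.1 * V₃) i j = 0) ∧
        -- H₃₁ = U₃ H̄₃₁ V₁ : blocks (1,1), (1,3), (2,3) vanish
        (∀ (i : Fin M₃) (j : Fin M₁),
          ((i : ℕ) < b ∧ (j : ℕ) < c) ∨
          ((i : ℕ) < b ∧ c + b ≤ (j : ℕ)) ∨
          (b ≤ (i : ℕ) ∧ c + b ≤ (j : ℕ)) →
          (U₃ * H.2.2.2.2.1 * V₁) i j = 0) ∧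
        -- H₃₂ = U₃ H̄₃₂ V₂ : block (2,1) vanishes
        (∀ (i : Fin M₃) (j : Fin M₂),
          (b ≤ (i : ℕ) ∧ (j : ℕ) < b) →
          (U₃ * H.2.2.2.2.2 * V₂) i j = 0) := by
  have e1 : M₁ = a + b + c := by omega
  have e2 : M₂ = b + a := by omega
  have e3 : M₃ = b + c := by omega
  have e1' : M₁ = c + b + a := by omega
  have ae₂ := ae_tuple_injective (couplingMapOfTuple₂ M₁ M₂ M₃) (by
    obtain ⟨A, B, C, F, G, h⟩ := exists_couplingMap_injective e1 e2 e3
    exact ⟨(A, B, C, G, F, 0), h⟩)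
  have ae₃ := ae_tuple_injective (couplingMapOfTuple₃ M₁ M₂ M₃) (by
    obtain ⟨A, B, C, F, G, h⟩ := exists_couplingMap_injective e1' e3 e2
    exact ⟨(B, A, F, 0, C, G), h⟩)
  filter_upwards [ae₂, ae₃] with H h₂ h₃
  obtain ⟨H₁₂, H₁₃, H₂₁, H₂₃, H₃₁, H₃₂⟩ := H
  replace h₂ : Function.Injective (couplingMap H₁₂ H₁₃ H₂₁ H₃₁ H₂₃) := h₂
  replace h₃ : Function.Injective (couplingMap H₁₃ H₁₂ H₃₁ H₂₁ H₃₂) := h₃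
  have inj₁₂ : ∀ w, H₁₂.mulVec w = 0 → w = 0 := fun w => mulVec_eq_zero_of_couplingMap h₂
  have inj₁₃ : ∀ v, H₁₃.mulVec v = 0 → v = 0 := fun v => mulVec_eq_zero_of_couplingMap h₃
  -- Rows of `U₁`: left kernel of `H₁₃`, filler, left kernel of `H₁₂`.
  have d₁₃ := finrank_annImage_ge H₁₃ ⊤
  have d₁₂ := finrank_annImage_ge H₁₂ ⊤
  rw [finrank_top, Module.finrank_fin_fun] at d₁₃ d₁₂
  obtain ⟨r, hr, hr1, hr3⟩ := exists_adapted_family e1 (annImage H₁₃ ⊤) (annImage H₁₂ ⊤)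
    (by omega) (by omega) (by
      intro s hs1 hs2
      refine dotProduct_eq_zero _ fun y => ?_
      obtain ⟨x, v, w, e, -, -⟩ := couplingMap_surj h₂ y 0 0
      rw [← e, dotProduct_add, hs1 v trivial, hs2 w trivial, add_zero])
  -- Columns of `V₁`: kernel of `H₂₁`, filler, kernel of `H₃₁`.
  have d₂₁ := finrank_ker_ge H₂₁.mulVecLin
  have d₃₁ := finrank_ker_ge H₃₁.mulVecLin
  simp only [Module.finrank_fin_fun] at d₂₁ d₃₁
  obtain ⟨z, hz, hz1, hz3⟩ := exists_adapted_family e1' H₂₁.mulVecLin.ker H₃₁.mulVecLin.ker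
    (by omega) (by omega) (by
      intro x hx1 hx2
      replace hx1 : H₂₁.mulVec x = 0 := hx1
      exact (couplingMap_inj h₂ (x := x) (v := 0) (w := 0) (by simp) hx2 (by simp [hx1])).1)
  replace hz1 : ∀ j : Fin M₁, (j : ℕ) < c → H₂₁.mulVec (z j) = 0 := hz1
  replace hz3 : ∀ j : Fin M₁, c + b ≤ (j : ℕ) → H₃₁.mulVec (z j) = 0 := hz3
  let r2 : Fin b → Fin M₁ → ℂ := fun k => r ⟨a + k, by omega⟩
  have r2_eq : ∀ i : Fin M₁, a ≤ (i : ℕ) → (i : ℕ) < a + b → ∃ k, r2 k = r i := by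
    intro i hi hi'
    exact ⟨⟨i - a, by omega⟩, congrArg r (Fin.ext (by simp; omega))⟩
  -- A vector in both ranges is killed by the outer rows of `U₁`, hence vanishes as soon as the
  -- middle rows kill it.
  have common : ∀ w v, H₁₂.mulVec w = H₁₃.mulVec v → (∀ k, r2 k ⬝ᵥ H₁₃.mulVec v = 0) →
      H₁₃.mulVec v = 0 := by
    intro w v e hk
    refine eq_zero_of_dotProduct_family hr fun i => ?_
    by_cases hi : (i : ℕ) < a
    · exact hr1 i hi v trivial
    by_cases hi' : (i : ℕ) < a + b
    · obtain ⟨k, hk'⟩ := r2_eq i (by omega) hi'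
      rw [← hk']
      exact hk k
    · rw [← e]
      exact hr3 i (by omega) w trivial
  obtain ⟨v, hv, hv1, hv2⟩ := exists_beamforming e1 e2 e3 h₂ inj₁₃ r2 common
  obtain ⟨w, hw, hw1, hw2⟩ := exists_beamforming e1' e3 e2 h₃ inj₁₂ r2
    (fun v w e hk => e ▸ common w v e.symm (e ▸ hk))
  obtain ⟨s, hs, hs1, hs2⟩ := exists_receiver_shaping e1 e2 e3 h₂
  obtain ⟨t, ht, ht1, ht2⟩ := exists_receiver_shaping e1' e3 e2 h₃
  refine ⟨Matrix.of r, (Matrix.of z).transpose, Matrix.of s, (Matrix.of w).transpose,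
    Matrix.of t, (Matrix.of v).transpose, isUnit_of_rows hr, isUnit_of_cols hz,
    isUnit_of_rows hs, isUnit_of_cols hw, isUnit_of_rows ht, isUnit_of_cols hv,
    ?_, ?_, ?_, ?_, ?_, ?_⟩
  all_goals
    intro i j hij
    rw [mul_mul_transpose_apply]
  · rcases hij with ⟨hi, hj⟩ | ⟨hi, hi', hj⟩ | ⟨hi, -⟩ | ⟨hi, -⟩
    · obtain ⟨v', e⟩ := mem_alignedSpace.1 (hw1 j hj)
      rw [← e]
      exact hr1 i hi v' trivial
    · obtain ⟨k, hk⟩ := r2_eq i hi hi'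
      rw [← hk]
      exact hw2 j hj k
    · exact hr3 i hi _ trivial
    · exact hr3 i hi _ trivial
  · rcases hij with ⟨hi, -⟩ | ⟨hi, -⟩ | ⟨hi, hi', hj⟩ | ⟨hi, hj⟩
    · exact hr1 i hi _ trivial
    · exact hr1 i hi _ trivial
    · obtain ⟨k, hk⟩ := r2_eq i hi hi'
      rw [← hk]
      exact hv2 j hj k
    · obtain ⟨w', e⟩ := mem_alignedSpace.1 (hv1 j hj)
      rw [← e]
      exact hr3 i hi w' trivial
  · rcases hij with ⟨-, hj⟩ | ⟨hi, hj⟩ | ⟨-, hj⟩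
    · rw [hz1 j hj, dotProduct_zero]
    · exact hs1 i hi _ (hz3 j hj)
    · rw [hz1 j hj, dotProduct_zero]
  · exact hs2 i hij.1 _ (hv1 j hij.2)
  · rcases hij with ⟨hi, hj⟩ | ⟨-, hj⟩ | ⟨-, hj⟩
    · exact ht1 i hi _ (hz1 j hj)
    · rw [hz3 j hj, dotProduct_zero]
    · rw [hz3 j hj, dotProduct_zero]
  · exact ht2 i hij.1 _ (hw1 j hij.2)
end

section
/- Let n = p + q + r for naturals p, q, r. Let U₁ ∈ ℂ^{p×n}, U₂ ∈ ℂ^{q×n}, U₃ ∈ ℂ^{r×n}, and A ∈ ℂ^{n×p}, B ∈ ℂ^{n×r}. Assume: U₁ B = 0, U₃ A = 0, U₂ A = 0, U₂ B = 0, U₂ has full row rank q, and the square matrices U₁ A ∈ ℂ^{p×p} and U₃ B ∈ ℂ^{r×r} are invertible. Then the n×n matrix obtained by stacking U₁, U₂, U₃ (rows of U₁ on top, then rows of U₂, then rows of U₃) is invertible. -/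
/-!
The stacked matrix is square, so it suffices that its rows are linearly independent. Suppose
`a U₁ + b U₂ + c U₃ = 0` for row vectors `a`, `b`, `c`. Multiplying on the right by `A` kills the
`U₂` and `U₃` terms and leaves `a (U₁ A) = 0`, so `a = 0`; multiplying by `B` gives `c = 0` in the
same way. Then `b U₂ = 0`, and `b = 0` because `U₂` has full row rank.
-/

/-- Stacking lemma for the shaping matrix `U₁`. If `n = p + q + r`,
`U₁ ∈ ℂ^{p×n}`, `U₂ ∈ ℂ^{q×n}`, `U₃ ∈ ℂ^{r×n}`, `A ∈ ℂ^{n×p}`, `B ∈ ℂ^{n×r}` satisfy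
`U₁ B = 0`, `U₃ A = 0`, `U₂ A = 0`, `U₂ B = 0`, `U₂` has full row rank `q`, and
`U₁ A`, `U₃ B` are invertible, then the `n × n` matrix obtained by stacking the rows of
`U₁`, then `U₂`, then `U₃` is invertible. -/
theorem stmt8 (p q r n : ℕ) (hn : n = p + q + r)
    (U₁ : Matrix (Fin p) (Fin n) ℂ) (U₂ : Matrix (Fin q) (Fin n) ℂ)
    (U₃ : Matrix (Fin r) (Fin n) ℂ)
    (A : Matrix (Fin n) (Fin p) ℂ) (B : Matrix (Fin n) (Fin r) ℂ)
    (h1B : U₁ * B = 0) (h3A : U₃ * A = 0) (h2A : U₂ * A = 0) (h2B : U₂ * B = 0)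
    (h2rank : U₂.rank = q)
    (h1A : IsUnit (U₁ * A)) (h3B : IsUnit (U₃ * B)) :
    IsUnit ((Matrix.fromRows U₁ (Matrix.fromRows U₂ U₃)).submatrix
      (((finCongr (by omega : n = p + (q + r))).trans finSumFinEquiv.symm).trans
        (Equiv.sumCongr (Equiv.refl (Fin p)) finSumFinEquiv.symm))
      id) := by
  rw [← Matrix.linearIndependent_rows_iff_isUnit]
  set e := ((finCongr (by omega : n = p + (q + r))).trans finSumFinEquiv.symm).trans
    (Equiv.sumCongr (Equiv.refl (Fin p)) finSumFinEquiv.symm)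
  -- Linear independence does not depend on the indexing of the rows, so `e` can be dropped.
  suffices h : LinearIndependent ℂ (Matrix.fromRows U₁ (Matrix.fromRows U₂ U₃)).row from
    h.comp e e.injective
  have h2 : LinearIndependent ℂ U₂.row := by
    rw [linearIndependent_iff_card_eq_finrank_span, Set.finrank,
      ← Matrix.rank_eq_finrank_span_row, h2rank, Fintype.card_fin]
  rw [← Matrix.vecMul_injective_iff] at h2 ⊢
  refine (injective_iff_map_eq_zero (Matrix.vecMulLinear _)).2 fun x hx => ?_
  rw [Matrix.vecMulLinear_apply, Matrix.vecMul_fromRows, Matrix.vecMul_fromRows] at hx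
  have ha : x ∘ Sum.inl = 0 := by
    apply Matrix.vecMul_injective_of_isUnit h1A
    have := congrArg (fun v => Matrix.vecMul v A) hx
    simpa [Matrix.add_vecMul, Matrix.vecMul_vecMul, h2A, h3A] using this
  have hc : (x ∘ Sum.inr) ∘ Sum.inr = 0 := by
    apply Matrix.vecMul_injective_of_isUnit h3B
    have := congrArg (fun v => Matrix.vecMul v B) hx
    simpa [Matrix.add_vecMul, Matrix.vecMul_vecMul, h2B, h1B] using this
  have hb : (x ∘ Sum.inr) ∘ Sum.inl = 0 := by
    apply h2
    simpa [ha, hc] using hx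
  ext (i | i | i)
  · exact congrFun ha i
  · exact congrFun hb i
  · exact congrFun hc i
end
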